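/- Let n ≥ 2, λ ∈ ℝ^n, and let X be a triangle of size n belonging to T_λ. Then h(X) · g_λ(X) = ε_λ · h(X); equivalently, since h(X) is lower unitriangular and hence invertible, g_λ(X) = h(X)^{−1} · ε_λ · h(X). -/

import Mathlib

/-- The triangle `X = (x^m_i)` (1-based, `1 ≤ i ≤ m ≤ n`) belongs to `T_λ`. -/
noncomputable def inTlam (n : ℕ) (lam : ℕ → ℝ) (X : ℕ → ℕ → ℝ) : Prop :=
  ∀ m i, 1 ≤ i → i ≤ m → m < n →
    lam m + (if i < m then
        Real.exp (X (m + 1) (i + 1) - X m i) + Real.exp (X (m - 1) i - X m i)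
      else Real.exp (X (m + 1) (m + 1) - X m m)) =
    lam (m + 1) + (if 1 < i then
        Real.exp (X m i - X (m + 1) i) + Real.exp (X m i - X (m - 1) (i - 1))
      else Real.exp (X m 1 - X (m + 1) 1))

/-- `ε_λ`: the matrix with diagonal `λ`, `1`s on the superdiagonal, `0` elsewhere. -/
def eps {n : ℕ} (lam : Fin n → ℝ) : Matrix (Fin n) (Fin n) ℝ :=
  Matrix.of fun i j : Fin n =>
    if (j : ℕ) = (i : ℕ) then lam i else if (j : ℕ) = (i : ℕ) + 1 then 1 else 0

/-- `l_{p+1}(a) = I_n + a f_{p+1}` (1-based index `i = p+1`). -/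
def lmat {n : ℕ} (p : ℕ) (a : ℝ) : Matrix (Fin n) (Fin n) ℝ :=
  1 + Matrix.of (fun i j : Fin n => if (i : ℕ) = p + 1 ∧ (j : ℕ) = p then a else 0)

/-- `L_m(u) = l_m(u_m) l_{m−1}(u_{m−1}) ⋯ l_1(u_1)`, where `u p` is the entry `u_{p+1}`. -/
def Lmat {n : ℕ} (m : ℕ) (u : ℕ → ℝ) : Matrix (Fin n) (Fin n) ℝ :=
  (((List.range m).reverse).map (fun p => lmat (n := n) p (u p))).prod

/-- `h(X) = L_1(u^1) ⋯ L_{n−1}(u^{n−1})` with `u^m_i = e^{x^{m+1}_{i+1} − x^m_i}`. -/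
noncomputable def hmat (n : ℕ) (X : ℕ → ℕ → ℝ) : Matrix (Fin n) (Fin n) ℝ :=
  ((List.range (n - 1)).map (fun q => Lmat (n := n) (q + 1) (fun p =>
    Real.exp (X (q + 2) (p + 2) - X (q + 1) (p + 1))))).prod

/-- `g_λ(X)`: the tridiagonal (Lax) matrix (Lean row `i` is row `i+1` of the paper). -/
noncomputable def gmat (n : ℕ) (lam : ℕ → ℝ) (X : ℕ → ℕ → ℝ) : Matrix (Fin n) (Fin n) ℝ :=
  Matrix.of fun i j : Fin n =>
    if (j : ℕ) = (i : ℕ) + 1 then 1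
    else if (i : ℕ) = (j : ℕ) + 1 then -Real.exp (X n ((i : ℕ) + 1) - X n (i : ℕ))
    else if i = j then
      (if (i : ℕ) = 0 then lam n + Real.exp (X (n - 1) 1 - X n 1)
       else if (i : ℕ) = n - 1 then lam n - Real.exp (X n n - X (n - 1) (n - 1))
       else lam n + Real.exp (X (n - 1) ((i : ℕ) + 1) - X n ((i : ℕ) + 1))
         - Real.exp (X n ((i : ℕ) + 1) - X (n - 1) (i : ℕ)))
    else 0

/-- Matrix from a function on naturals. -/
def natMat (n : ℕ) (F : ℕ → ℕ → ℝ) : Matrix (Fin n) (Fin n) ℝ :=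
  Matrix.of fun i j : Fin n => F i j

/-- Entries of a matrix supported on the subdiagonal. -/
def subF (u : ℕ → ℝ) : ℕ → ℕ → ℝ := fun i j => if i = j + 1 then u j else 0

/-- Entries of a tridiagonal matrix. -/
def triF (a b : ℕ → ℝ) : ℕ → ℕ → ℝ := fun i j =>
  if j = i + 1 then 1 else if i = j + 1 then - b j else if i = j then a i else 0

theorem mul_subF (n : ℕ) (F : ℕ → ℕ → ℝ) (u : ℕ → ℝ) (hu : ∀ j, n ≤ j + 1 → u j = 0) :
    natMat n F * natMat n (subF u) = natMat n (fun i j => F i (j + 1) * u j) := by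
  ext i j
  simp only [natMat, subF, Matrix.mul_apply, Matrix.of_apply]
  by_cases h : (j : ℕ) + 1 < n
  · rw [Finset.sum_eq_single (⟨j + 1, h⟩ : Fin n)]
    · simp
    · intro b _ hb
      rw [if_neg, mul_zero]
      intro hc
      exact hb (Fin.ext hc)
    · simp
  · rw [hu j (by omega), mul_zero]
    simp

theorem subF_mul (n : ℕ) (F : ℕ → ℕ → ℝ) (u : ℕ → ℝ) :
    natMat n (subF u) * natMat n F =
      natMat n (fun i j => if i = 0 then 0 else u (i - 1) * F (i - 1) j) := by
  ext i j
  simp only [natMat, subF, Matrix.mul_apply, Matrix.of_apply]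
  by_cases h : (i : ℕ) = 0
  · rw [if_pos h]
    apply Finset.sum_eq_zero
    intro x _
    rw [if_neg (by omega), zero_mul]
  · rw [if_neg h, Finset.sum_eq_single (⟨i - 1, by omega⟩ : Fin n)]
    · rw [if_pos (by simp; omega)]
    · intro b _ hb
      rw [if_neg, zero_mul]
      intro hc
      apply hb
      apply Fin.ext
      simp
      omega
    · simp

theorem lmat_eq (n p : ℕ) (a : ℝ) :
    lmat (n := n) p a = 1 + natMat n (subF (fun j => if j = p then a else 0)) := by
  unfold lmat natMat subF
  congr 1
  ext i j
  simp only [Matrix.of_apply]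
  grind

/-- Truncation of a sequence. -/
def trunc (m : ℕ) (u : ℕ → ℝ) : ℕ → ℝ := fun j => if j < m then u j else 0

theorem natMat_add (n : ℕ) (F G : ℕ → ℕ → ℝ) :
    natMat n F + natMat n G = natMat n (fun i j => F i j + G i j) := rfl

theorem natMat_sub (n : ℕ) (F G : ℕ → ℕ → ℝ) :
    natMat n F - natMat n G = natMat n (fun i j => F i j - G i j) := rfl

theorem B_succ (n m : ℕ) (hm : m + 1 < n) (u : ℕ → ℝ) :
    1 - natMat n (subF (trunc (m + 1) u)) =
      (1 - natMat n (subF (trunc m u))) * lmat m (-u m) := by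
  rw [lmat_eq, mul_add, mul_one, sub_mul, one_mul, mul_subF]
  · ext i j
    simp only [natMat, Matrix.add_apply, Matrix.sub_apply, Matrix.of_apply, subF, trunc]
    grind
  · grind

theorem lmat_mul_neg (n m : ℕ) (hm : m + 1 < n) (a : ℝ) :
    lmat (n := n) m a * lmat m (-a) = 1 := by
  rw [lmat_eq, lmat_eq, mul_add, mul_one, add_mul, one_mul, mul_subF]
  · ext i j
    simp only [natMat, Matrix.add_apply, Matrix.of_apply, subF]
    grind
  · grind

theorem Lmat_succ (n m : ℕ) (u : ℕ → ℝ) :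
    Lmat (n := n) (m + 1) u = lmat m (u m) * Lmat m u := by
  simp [Lmat, List.range_succ]

theorem Lmat_mul_B (n m : ℕ) (hm : m < n) (u : ℕ → ℝ) :
    Lmat (n := n) m u * (1 - natMat n (subF (trunc m u))) = 1 := by
  induction m with
  | zero =>
    have : natMat n (subF (trunc 0 u)) = 0 := by
      ext i j
      simp [natMat, subF, trunc]
    rw [this]
    simp [Lmat]
  | succ m ih =>
    rw [Lmat_succ, B_succ n m hm, mul_assoc, ← mul_assoc (Lmat m u), ih (by omega), one_mul,
      lmat_mul_neg n m hm]

/-- Diagonal entries at level `m`. -/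
noncomputable def aE (lam : ℕ → ℝ) (X : ℕ → ℕ → ℝ) (m i : ℕ) : ℝ :=
  if i < m then lam m + (if i + 1 < m then Real.exp (X (m - 1) (i + 1) - X m (i + 1)) else 0)
    - (if 0 < i then Real.exp (X m (i + 1) - X (m - 1) i) else 0)
  else lam (i + 1)

/-- Subdiagonal entries at level `m`. -/
noncomputable def bE (X : ℕ → ℕ → ℝ) (m j : ℕ) : ℝ :=
  if j + 1 < m then Real.exp (X m (j + 2) - X m (j + 1)) else 0

/-- The parameters of `L_m`. -/
noncomputable def uE (X : ℕ → ℕ → ℝ) (m : ℕ) : ℕ → ℝ := fun j =>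
  Real.exp (X (m + 1) (j + 2) - X m (j + 1))

theorem key_diag (n : ℕ) (lam : ℕ → ℝ) (X : ℕ → ℕ → ℝ) (hX : inTlam n lam X) (m i : ℕ)
    (hm : m < n) (hi : i < m) :
    aE lam X m i + uE X m i = lam (m + 1) + Real.exp (X m (i + 1) - X (m + 1) (i + 1)) := by
  have h := hX m (i + 1) (by omega) (by omega) hm
  unfold aE uE
  rw [if_pos hi]
  by_cases h1 : i + 1 < m <;> by_cases h2 : 0 < i
  · simp [h1, h2] at h ⊢; linarith
  · obtain rfl : i = 0 := by omega
    simp [h1] at h ⊢; linarith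
  · obtain rfl : m = i + 1 := by omega
    simp [h2] at h ⊢; linarith
  · obtain rfl : i = 0 := by omega
    obtain rfl : m = 1 := by omega
    simp at h ⊢; linarith

theorem key_diag2 (lam : ℕ → ℝ) (X : ℕ → ℕ → ℝ) (m i : ℕ) (hi : i ≤ m) :
    aE lam X (m + 1) i = lam (m + 1)
      + (if i < m then Real.exp (X m (i + 1) - X (m + 1) (i + 1)) else 0)
      - (if 0 < i then uE X m (i - 1) else 0) := by
  unfold aE uE
  rw [if_pos (by omega)]
  rcases i with _ | i <;> simp

theorem scal_diag (n : ℕ) (lam : ℕ → ℝ) (X : ℕ → ℕ → ℝ) (hX : inTlam n lam X) (m i : ℕ)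
    (hm : m < n) :
    aE lam X (m + 1) i - trunc m (uE X m) i =
      aE lam X m i - (if i = 0 then 0 else trunc m (uE X m) (i - 1)) := by
  by_cases hi : i < m
  · have h1 := key_diag n lam X hX m i hm hi
    have h2 := key_diag2 lam X m i hi.le
    rw [if_pos hi] at h2
    unfold trunc
    grind
  · by_cases hi' : i = m
    · have h2 := key_diag2 lam X m i hi'.le
      have h3 : aE lam X m i = lam (m + 1) := by unfold aE; rw [if_neg hi, hi']
      unfold trunc
      grind
    · unfold aE trunc
      grind

theorem scal_sub (n : ℕ) (lam : ℕ → ℝ) (X : ℕ → ℕ → ℝ) (hX : inTlam n lam X) (m i : ℕ)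
    (hm : m < n) :
    - bE X (m + 1) i - aE lam X (m + 1) (i + 1) * trunc m (uE X m) i =
      - bE X m i - trunc m (uE X m) i * aE lam X m i := by
  by_cases hi : i < m
  · have h1 := key_diag n lam X hX m i hm hi
    have h2 := key_diag2 lam X m (i + 1) hi
    have e1 : uE X m i * Real.exp (X m (i + 1) - X (m + 1) (i + 1)) = bE X (m + 1) i := by
      unfold uE bE
      rw [if_pos (by omega), ← Real.exp_add]
      congr 1; ring
    have e2 : uE X m i * (if i + 1 < m then
        Real.exp (X m (i + 1 + 1) - X (m + 1) (i + 1 + 1)) else 0) = bE X m i := by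
      unfold uE bE
      split_ifs
      · rw [← Real.exp_add]
        congr 1; ring
      · simp
    simp only [Nat.succ_pos, if_true, Nat.add_sub_cancel] at h2
    have h1' : aE lam X m i = lam (m + 1) + Real.exp (X m (i + 1) - X (m + 1) (i + 1))
      - uE X m i := by linarith
    rw [trunc, if_pos hi, h2, h1', ← e1, ← e2]
    ring
  · have e1 : bE X (m + 1) i = 0 := by unfold bE; rw [if_neg (by omega)]
    have e2 : bE X m i = 0 := by unfold bE; rw [if_neg (by omega)]
    rw [e1, e2, trunc, if_neg hi]
    ring

theorem scal_low (X : ℕ → ℕ → ℝ) (m i : ℕ) :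
    bE X (m + 1) (i + 1) * trunc m (uE X m) i = trunc m (uE X m) (i + 1) * bE X m i := by
  unfold bE trunc uE
  by_cases hi : i + 1 < m
  · rw [if_pos (by omega), if_pos (by omega), if_pos hi, if_pos hi, ← Real.exp_add,
      ← Real.exp_add]
    congr 1; ring
  · rw [if_neg (by omega), if_neg hi]
    ring

/-- The intermediate matrix `G_m`. -/
noncomputable def GE (n : ℕ) (lam : ℕ → ℝ) (X : ℕ → ℕ → ℝ) (m : ℕ) : Matrix (Fin n) (Fin n) ℝ :=
  natMat n (triF (aE lam X m) (bE X m))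

theorem GE_B (n : ℕ) (lam : ℕ → ℝ) (X : ℕ → ℕ → ℝ) (hX : inTlam n lam X) (m : ℕ)
    (hm : m < n) (hmn : m + 1 ≤ n) :
    GE n lam X (m + 1) * (1 - natMat n (subF (trunc m (uE X m)))) =
      (1 - natMat n (subF (trunc m (uE X m)))) * GE n lam X m := by
  unfold GE
  rw [mul_sub, sub_mul, mul_one, one_mul, subF_mul, mul_subF]
  · rw [natMat_sub, natMat_sub]
    congr 1
    funext i j
    have h1 := scal_diag n lam X hX m i hm
    have h2 := scal_sub n lam X hX m j hm
    have h3 := scal_low X m j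
    unfold triF
    rcases lt_trichotomy i j with h | h | h
    · grind
    · subst h; grind
    · by_cases h4 : i = j + 1
      · subst h4; grind
      · by_cases h5 : i = j + 2
        · subst h5; grind
        · grind
  · intro j hj
    unfold trunc
    rw [if_neg (by omega)]

theorem L_GE (n : ℕ) (lam : ℕ → ℝ) (X : ℕ → ℕ → ℝ) (hX : inTlam n lam X) (m : ℕ)
    (hm : m < n) :
    Lmat m (uE X m) * GE n lam X (m + 1) = GE n lam X m * Lmat m (uE X m) := by
  have h1 := Lmat_mul_B n m hm (uE X m)
  have h2 := mul_eq_one_comm.mp h1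
  have h3 := GE_B n lam X hX m hm hm
  calc _ = Lmat m (uE X m) * (GE n lam X (m + 1) *
        ((1 - natMat n (subF (trunc m (uE X m)))) * Lmat m (uE X m))) := by rw [h2, mul_one]
    _ = (Lmat m (uE X m) * (1 - natMat n (subF (trunc m (uE X m))))) * GE n lam X m
        * Lmat m (uE X m) := by
      rw [← mul_assoc (GE n lam X (m + 1)), h3]; simp only [mul_assoc]
    _ = _ := by rw [h1, one_mul]

/-- Partial products. -/
noncomputable def hP (n : ℕ) (X : ℕ → ℕ → ℝ) (k : ℕ) : Matrix (Fin n) (Fin n) ℝ :=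
  ((List.range k).map (fun q => Lmat (n := n) (q + 1) (uE X (q + 1)))).prod

theorem hP_succ (n : ℕ) (X : ℕ → ℕ → ℝ) (k : ℕ) :
    hP n X (k + 1) = hP n X k * Lmat (k + 1) (uE X (k + 1)) := by
  simp [hP, List.range_succ]

theorem hP_GE (n : ℕ) (lam : ℕ → ℝ) (X : ℕ → ℕ → ℝ) (hX : inTlam n lam X) (k : ℕ)
    (hk : k < n) : hP n X k * GE n lam X (k + 1) = GE n lam X 1 * hP n X k := by
  induction k with
  | zero => simp [hP]
  | succ k ih =>
    rw [hP_succ, mul_assoc, L_GE n lam X hX (k + 1) hk, ← mul_assoc, ih (by omega), mul_assoc]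

theorem hP_unit (n : ℕ) (X : ℕ → ℕ → ℝ) (k : ℕ) (hk : k < n) : IsUnit (hP n X k) := by
  induction k with
  | zero => simp [hP]
  | succ k ih =>
    rw [hP_succ]
    refine (ih (by omega)).mul ?_
    exact IsUnit.of_mul_eq_one _ (Lmat_mul_B n (k + 1) hk (uE X (k + 1)))

theorem GE_one (n : ℕ) (lam : ℕ → ℝ) (X : ℕ → ℕ → ℝ) :
    GE n lam X 1 = eps (fun i : Fin n => lam ((i : ℕ) + 1)) := by
  ext i j
  simp only [GE, natMat, eps, triF, aE, bE, Matrix.of_apply]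
  grind

theorem GE_n (n : ℕ) (hn : 2 ≤ n) (lam : ℕ → ℝ) (X : ℕ → ℕ → ℝ) :
    GE n lam X n = gmat n lam X := by
  ext i j
  simp only [GE, natMat, gmat, triF, aE, bE, Matrix.of_apply]
  have hi := i.2
  by_cases h1 : (j : ℕ) = i + 1
  · rw [if_pos h1, if_pos h1]
  rw [if_neg h1, if_neg h1]
  by_cases h2 : (i : ℕ) = j + 1
  · rw [if_pos h2, if_pos h2, if_pos (by omega), h2]
  rw [if_neg h2, if_neg h2]
  by_cases h3 : i = j
  · rw [if_pos (congrArg _ h3), if_pos h3, if_pos hi]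
    by_cases h4 : (i : ℕ) = 0
    · rw [if_pos h4, h4, if_pos (by omega)]; simp
    rw [if_neg h4, if_pos (Nat.pos_of_ne_zero h4)]
    by_cases h5 : (i : ℕ) = n - 1
    · rw [if_pos h5, if_neg (by omega), h5, Nat.sub_add_cancel (by omega)]; ring
    · rw [if_neg h5, if_pos (by omega)]
  · rw [if_neg h3, if_neg (fun h => h3 (Fin.ext h))]

/-- (Kostant-type factorisation.) For `X ∈ T_λ`,
`h(X)·g_λ(X) = ε_λ·h(X)`; equivalently `g_λ(X) = h(X)⁻¹ ε_λ h(X)`. -/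
theorem stmt8 (n : ℕ) (hn : 2 ≤ n) (lam : ℕ → ℝ) (X : ℕ → ℕ → ℝ)
    (hX : inTlam n lam X) :
    hmat n X * gmat n lam X = eps (fun i : Fin n => lam ((i : ℕ) + 1)) * hmat n X ∧
    gmat n lam X = (hmat n X)⁻¹ * (eps (fun i : Fin n => lam ((i : ℕ) + 1)) * hmat n X) := by

  have hh : hmat n X = hP n X (n - 1) := rfl
  have key : hmat n X * gmat n lam X = eps (fun i : Fin n => lam ((i : ℕ) + 1)) * hmat n X := by
    have h := hP_GE n lam X hX (n - 1) (by omega)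
    rw [Nat.sub_add_cancel (by omega), GE_one, GE_n n hn] at h
    rw [hh, h]
  refine ⟨key, ?_⟩
  have hu : IsUnit (hmat n X).det := by
    rw [← Matrix.isUnit_iff_isUnit_det, hh]
    exact hP_unit n X (n - 1) (by omega)
  rw [← key, ← mul_assoc, Matrix.nonsing_inv_mul _ hu, one_mul]
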